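/- Survivor sampling identifies the conditional intention-to-treat odds ratio (Theorem B3). Assume S2: there are constants δ_l ∈ (0,1] such that P(S=1 | L0=l, A0=a, Y_K=y) = δ_l·(1−y) for all l, a, y with P(L0=l, A0=a, Y_K=y) > 0. Assume consistency, BCE, and positivity, and fix l with P(L0=l, Y_K=1) > 0, P(L0=l, S=1) > 0, and such that Odds(Y_K(a)=1 | L0=l) is defined and nonzero for a = 0,1. Then ( E[1{A0=1} | L0=l, Y_K=1] / E[1{A0=0} | L0=l, Y_K=1] ) / ( E[1{A0=1} | L0=l, S=1] / E[1{A0=0} | L0=l, S=1] ) = Odds(Y_K(1)=1 | L0=l) / Odds(Y_K(0)=1 | L0=l). -/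

import Mathlib

open MeasureTheory

/-- `prb P E` is the probability of the event `E` under `P`, as a real number. -/
noncomputable def prb {Ω : Type*} [MeasurableSpace Ω] (P : Measure Ω) (E : Set Ω) : ℝ :=
  (P E).toReal

/-- `cprb P E F` is the conditional probability `P(E | F)`. -/
noncomputable def cprb {Ω : Type*} [MeasurableSpace Ω] (P : Measure Ω) (E F : Set Ω) : ℝ :=
  prb P (E ∩ F) / prb P F

/-- `cexpb P X F` is the conditional expectation `E[X | F]` of the random variable `X`
given the event `F`. -/
noncomputable def cexpb {Ω : Type*} [MeasurableSpace Ω] (P : Measure Ω) (X : Ω → ℝ)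
    (F : Set Ω) : ℝ :=
  (∫ ω in F, X ω ∂P) / prb P F

/-!
Write `F` for the stratum `{L0 = l}`. Since `S` selects survivors with a probability that does not
depend on treatment, the treatment odds given `F` and `S = 1` are those given `F` and `Y_K = 0`.
The left-hand side is therefore the odds ratio of the 2 × 2 table of `A0` and `Y_K` within `F`,
which is symmetric in its two variables: it is also the ratio of the outcome odds in the two
treatment arms. By consistency and exchangeability, the outcome odds in arm `a` are those of
`Y_K(a)` in the whole stratum.
-/

/-- The conditional odds `Odds(X = 1 | F)` of a binary random variable `X` given the event `F`.
It has the junk value `0` if `P(F) = 0` or `P(X = 0 | F) = 0`. -/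
noncomputable def condOdds {Ω : Type*} [MeasurableSpace Ω] (P : Measure Ω) (X : Ω → Bool)
    (F : Set Ω) : ℝ :=
  cprb P {ω | X ω = true} F / cprb P {ω | X ω = false} F

section

variable {Ω : Type*} [MeasurableSpace Ω] {P : Measure Ω} {B E E' F S : Set Ω} {X Y : Ω → Bool}
  {δ : ℝ}

lemma prb_pos_of_cprb_pos (h : 0 < cprb P E F) : 0 < prb P F :=
  measureReal_nonneg.lt_of_ne' (div_ne_zero_iff.mp h.ne').2

lemma prb_inter_ne_zero_of_cprb_ne_zero (h : cprb P E F ≠ 0) : prb P (E ∩ F) ≠ 0 :=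
  (div_ne_zero_iff.mp h).1

lemma prb_ne_zero_of_subset [IsFiniteMeasure P] (hEF : E ⊆ F) (hE : prb P E ≠ 0) :
    prb P F ≠ 0 :=
  ((measureReal_nonneg.lt_of_ne' hE).trans_le (measureReal_mono hEF)).ne'

lemma prb_true_inter_add_prb_false_inter [IsFiniteMeasure P] (hX : Measurable X) (E : Set Ω) :
    prb P ({ω | X ω = true} ∩ E) + prb P ({ω | X ω = false} ∩ E) = prb P E := by
  have hdiff : E \ {ω | X ω = true} = {ω | X ω = false} ∩ E := by
    ext ω
    simp [and_comm]
  rw [Set.inter_comm, ← hdiff]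
  exact measureReal_inter_add_sdiff (hX (measurableSet_singleton true))

lemma cprb_true_add_cprb_false [IsFiniteMeasure P] (hX : Measurable X) (hF : prb P F ≠ 0) :
    cprb P {ω | X ω = true} F + cprb P {ω | X ω = false} F = 1 := by
  rw [cprb, cprb, ← add_div, prb_true_inter_add_prb_false_inter hX, div_self hF]

lemma prb_inter_eq_mul_of_cprb_eq [IsFiniteMeasure P] {c : ℝ}
    (h : 0 < prb P F → cprb P E F = c) : prb P (E ∩ F) = c * prb P F := by
  by_cases hF : prb P F = 0
  · have hEF : prb P (E ∩ F) = 0 := by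
      by_contra hne
      exact prb_ne_zero_of_subset Set.inter_subset_right hne hF
    rw [hEF, hF, mul_zero]
  · rw [← h (measureReal_nonneg.lt_of_ne' hF), cprb, div_mul_cancel₀ _ hF]

lemma cprb_congr_ae (h : ∀ᵐ ω ∂P, ω ∈ F → (ω ∈ E ↔ ω ∈ E')) : cprb P E F = cprb P E' F := by
  have hinter : (E ∩ F : Set Ω) =ᵐ[P] (E' ∩ F : Set Ω) := by
    filter_upwards [h] with ω hω
    exact propext (and_congr_left hω)
  rw [cprb, cprb, prb, measure_congr hinter, ← prb]

lemma cprb_inter_eq_div (hF : prb P F ≠ 0) :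
    cprb P E (F ∩ B) = cprb P (E ∩ B) F / cprb P B F := by
  rw [cprb, cprb, cprb, div_div_div_cancel_right₀ hF, Set.inter_comm F, Set.inter_assoc]

lemma cprb_inter_eq_of_condIndep (hB : 0 < cprb P B F)
    (hind : cprb P (E ∩ B) F = cprb P E F * cprb P B F) : cprb P E (F ∩ B) = cprb P E F := by
  rw [cprb_inter_eq_div (prb_pos_of_cprb_pos hB).ne', hind, mul_div_cancel_right₀ _ hB.ne']

lemma cexpb_ite_eq_cprb {α : Type*} [MeasurableSpace α] [MeasurableSingletonClass α]
    [DecidableEq α] {Z : Ω → α} (hZ : Measurable Z) (z : α) (F : Set Ω) :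
    cexpb P (fun ω => if Z ω = z then (1 : ℝ) else 0) F = cprb P {ω | Z ω = z} F := by
  have hmeas : MeasurableSet {ω | Z ω = z} := hZ (measurableSet_singleton z)
  have hindicator : (fun ω => if Z ω = z then (1 : ℝ) else 0) = {ω | Z ω = z}.indicator 1 := by
    ext ω
    simp [Set.indicator_apply]
  rw [cexpb, hindicator, integral_indicator_one hmeas, measureReal_restrict_apply hmeas]
  rfl

lemma condOdds_congr (h : ∀ x, cprb P {ω | X ω = x} E = cprb P {ω | Y ω = x} F) :
    condOdds P X E = condOdds P Y F := by
  rw [condOdds, condOdds, h, h]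

lemma condOdds_eq_prb_div_prb (hF : prb P F ≠ 0) :
    condOdds P X F = prb P ({ω | X ω = true} ∩ F) / prb P ({ω | X ω = false} ∩ F) :=
  div_div_div_cancel_right₀ hF _ _

theorem condOdds_div_condOdds_comm (hX : ∀ x, prb P (F ∩ {ω | X ω = x}) ≠ 0)
    (hY : ∀ y, prb P (F ∩ {ω | Y ω = y}) ≠ 0) :
    condOdds P X (F ∩ {ω | Y ω = true}) / condOdds P X (F ∩ {ω | Y ω = false}) =
      condOdds P Y (F ∩ {ω | X ω = true}) / condOdds P Y (F ∩ {ω | X ω = false}) := by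
  have hcell (x y : Bool) :
      {ω | X ω = x} ∩ (F ∩ {ω | Y ω = y}) = {ω | Y ω = y} ∩ (F ∩ {ω | X ω = x}) := by
    rw [Set.inter_left_comm, Set.inter_comm {ω | X ω = x}, Set.inter_left_comm]
  simp only [condOdds_eq_prb_div_prb (hX _), condOdds_eq_prb_div_prb (hY _), hcell]
  exact div_div_div_comm _ _ _ _

lemma prb_inter_eq_mul_prb_survivors [IsFiniteMeasure P] (hY : Measurable Y)
    (hS : ∀ y, 0 < prb P (F ∩ {ω | Y ω = y}) →
      cprb P S (F ∩ {ω | Y ω = y}) = δ * (1 - if y = true then (1 : ℝ) else 0)) :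
    prb P (F ∩ S) = δ * prb P (F ∩ {ω | Y ω = false}) := by
  have hcell (y : Bool) : prb P ({ω | Y ω = y} ∩ (F ∩ S)) =
      δ * (1 - if y = true then (1 : ℝ) else 0) * prb P (F ∩ {ω | Y ω = y}) := by
    rw [← prb_inter_eq_mul_of_cprb_eq (hS y), Set.inter_comm, Set.inter_right_comm,
      Set.inter_comm S]
  rw [← prb_true_inter_add_prb_false_inter hY, hcell, hcell]
  simp

theorem cprb_inter_eq_cprb_survivors [IsFiniteMeasure P] (hX : Measurable X) (hY : Measurable Y)
    (hδ : δ ≠ 0)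
    (hS : ∀ x y, 0 < prb P (F ∩ ({ω | X ω = x} ∩ {ω | Y ω = y})) →
      cprb P S (F ∩ ({ω | X ω = x} ∩ {ω | Y ω = y})) =
        δ * (1 - if y = true then (1 : ℝ) else 0)) (x : Bool) :
    cprb P {ω | X ω = x} (F ∩ S) = cprb P {ω | X ω = x} (F ∩ {ω | Y ω = false}) := by
  have hcell (x : Bool) : prb P ({ω | X ω = x} ∩ (F ∩ S)) =
      δ * prb P ({ω | X ω = x} ∩ (F ∩ {ω | Y ω = false})) := by
    simp only [← Set.inter_assoc, Set.inter_comm _ F] at hS ⊢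
    exact prb_inter_eq_mul_prb_survivors hY (hS x)
  have htotal : prb P (F ∩ S) = δ * prb P (F ∩ {ω | Y ω = false}) := by
    rw [← prb_true_inter_add_prb_false_inter hX, hcell, hcell, ← mul_add,
      prb_true_inter_add_prb_false_inter hX]
  rw [cprb, cprb, hcell, htotal, mul_div_mul_left _ _ hδ]

theorem cprb_treated_eq_cprb_counterfactual {α β : Type*} {A : Ω → α} {Y Ya : Ω → β} {a : α}
    {y : β} (hcons : ∀ᵐ ω ∂P, A ω = a → Y ω = Ya ω) (hpos : 0 < cprb P {ω | A ω = a} F)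
    (hexch : cprb P ({ω | Ya ω = y} ∩ {ω | A ω = a}) F =
      cprb P {ω | Ya ω = y} F * cprb P {ω | A ω = a} F) :
    cprb P {ω | Y ω = y} (F ∩ {ω | A ω = a}) = cprb P {ω | Ya ω = y} F := by
  rw [← cprb_inter_eq_of_condIndep hpos hexch]
  apply cprb_congr_ae
  filter_upwards [hcons] with ω hω hmem
  rw [hω hmem.2]

theorem survivor_conditional_ITT_oddsRatio_general [IsFiniteMeasure P] {A0 YK : Ω → Bool}
    {Ycf : Bool → Ω → Bool} (hA0 : Measurable A0) (hYK : Measurable YK) (hδ : δ ≠ 0)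
    (hS2 : ∀ a y, 0 < prb P (F ∩ ({ω | A0 ω = a} ∩ {ω | YK ω = y})) →
      cprb P S (F ∩ ({ω | A0 ω = a} ∩ {ω | YK ω = y})) =
        δ * (1 - if y = true then (1 : ℝ) else 0))
    (hcons : ∀ a, ∀ᵐ ω ∂P, A0 ω = a → YK ω = Ycf a ω)
    (hBCE : ∀ a y, cprb P ({ω | Ycf a ω = y} ∩ {ω | A0 ω = a}) F =
      cprb P {ω | Ycf a ω = y} F * cprb P {ω | A0 ω = a} F)
    (hpos : 0 < cprb P {ω | A0 ω = true} F ∧ cprb P {ω | A0 ω = true} F < 1)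
    (hodds : ∀ a, 0 < cprb P {ω | Ycf a ω = true} F ∧ 0 < cprb P {ω | Ycf a ω = false} F) :
    condOdds P A0 (F ∩ {ω | YK ω = true}) / condOdds P A0 (F ∩ S) =
      condOdds P (Ycf true) F / condOdds P (Ycf false) F := by
  have hF : prb P F ≠ 0 := (prb_pos_of_cprb_pos hpos.1).ne'
  have harm : ∀ a, 0 < cprb P {ω | A0 ω = a} F :=
    Bool.forall_bool.mpr ⟨by linarith [cprb_true_add_cprb_false hA0 hF], hpos.1⟩
  have hcf (a y : Bool) :
      cprb P {ω | YK ω = y} (F ∩ {ω | A0 ω = a}) = cprb P {ω | Ycf a ω = y} F :=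
    cprb_treated_eq_cprb_counterfactual (hcons a) (harm a) (hBCE a y)
  have hcell (a y : Bool) : prb P ({ω | YK ω = y} ∩ (F ∩ {ω | A0 ω = a})) ≠ 0 := by
    apply prb_inter_ne_zero_of_cprb_ne_zero
    rw [hcf]
    cases y
    exacts [(hodds a).2.ne', (hodds a).1.ne']
  have hA0_ne (a : Bool) : prb P (F ∩ {ω | A0 ω = a}) ≠ 0 :=
    prb_ne_zero_of_subset Set.inter_subset_right (hcell a true)
  have hYK_ne (y : Bool) : prb P (F ∩ {ω | YK ω = y}) ≠ 0 :=
    prb_ne_zero_of_subset (fun _ h => ⟨h.2.1, h.1⟩) (hcell true y)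
  rw [condOdds_congr (cprb_inter_eq_cprb_survivors hA0 hYK hδ hS2),
    condOdds_div_condOdds_comm hA0_ne hYK_ne, condOdds_congr (hcf true),
    condOdds_congr (hcf false)]

end

/-- Theorem B3: survivor sampling identifies the conditional intention-to-treat
odds ratio. -/
theorem survivor_conditional_ITT_oddsRatio
    {Ω : Type*} [MeasurableSpace Ω] (P : Measure Ω) [IsProbabilityMeasure P]
    {𝓛 : Type*} [Fintype 𝓛] [MeasurableSpace 𝓛]
    (L0 : Ω → 𝓛) (A0 YK S : Ω → Bool) (Ycf : Bool → Ω → Bool)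
    (hL0 : Measurable L0) (hA0 : Measurable A0) (hYK : Measurable YK)
    (hS : Measurable S) (hYcf : ∀ a, Measurable (Ycf a))
    -- condition S2 (survivor sampling)
    (δ : 𝓛 → ℝ) (hδpos : ∀ l, 0 < δ l) (hδle : ∀ l, δ l ≤ 1)
    (hS2 : ∀ (l : 𝓛) (a y : Bool),
      0 < prb P {ω | L0 ω = l ∧ A0 ω = a ∧ YK ω = y} →
      cprb P {ω | S ω = true} {ω | L0 ω = l ∧ A0 ω = a ∧ YK ω = y} =
        δ l * (1 - (if y = true then (1:ℝ) else 0)))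
    -- consistency
    (hcons : ∀ a : Bool, ∀ᵐ ω ∂P, A0 ω = a → YK ω = Ycf a ω)
    -- baseline conditional exchangeability
    (hBCE : ∀ (a : Bool) (l : 𝓛), 0 < prb P {ω | L0 ω = l} → ∀ (y a' : Bool),
      cprb P {ω | Ycf a ω = y ∧ A0 ω = a'} {ω | L0 ω = l} =
        cprb P {ω | Ycf a ω = y} {ω | L0 ω = l} *
          cprb P {ω | A0 ω = a'} {ω | L0 ω = l})
    -- positivity
    (hpos : ∀ l : 𝓛, 0 < prb P {ω | L0 ω = l} →
      0 < cprb P {ω | A0 ω = true} {ω | L0 ω = l} ∧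
        cprb P {ω | A0 ω = true} {ω | L0 ω = l} < 1)
    -- the fixed covariate level l
    (l : 𝓛)
    (hlY : 0 < prb P {ω | L0 ω = l ∧ YK ω = true})
    (hlS : 0 < prb P {ω | L0 ω = l ∧ S ω = true})
    -- Odds(Y_K(a)=1 | L0=l) is defined and nonzero for a = 0,1
    (hodds : ∀ a : Bool, 0 < cprb P {ω | Ycf a ω = true} {ω | L0 ω = l} ∧
      0 < cprb P {ω | Ycf a ω = false} {ω | L0 ω = l}) :
    (cexpb P (fun ω => if A0 ω = true then (1:ℝ) else 0)
        ({ω | L0 ω = l} ∩ {ω | YK ω = true}) /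
      cexpb P (fun ω => if A0 ω = false then (1:ℝ) else 0)
        ({ω | L0 ω = l} ∩ {ω | YK ω = true})) /
    (cexpb P (fun ω => if A0 ω = true then (1:ℝ) else 0)
        ({ω | L0 ω = l} ∩ {ω | S ω = true}) /
      cexpb P (fun ω => if A0 ω = false then (1:ℝ) else 0)
        ({ω | L0 ω = l} ∩ {ω | S ω = true})) =
    (cprb P {ω | Ycf true ω = true} {ω | L0 ω = l} /
        cprb P {ω | Ycf true ω = false} {ω | L0 ω = l}) /
      (cprb P {ω | Ycf false ω = true} {ω | L0 ω = l} /
        cprb P {ω | Ycf false ω = false} {ω | L0 ω = l}) := by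
  simp only [cexpb_ite_eq_cprb hA0]
  have hl : 0 < prb P {ω | L0 ω = l} := prb_pos_of_cprb_pos (hodds true).1
  exact survivor_conditional_ITT_oddsRatio_general hA0 hYK (hδpos l).ne' (hS2 l) hcons
    (fun a y => hBCE a l hl y a) (hpos l hl) hodds
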